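/- Let (V, ω) be a symplectic space over a field F with an orthogonal decomposition V = V1 ⊕ V2, and let W ⊆ V be an isotropic subspace. Then the restrictions of ω to the projections p1(W) and p2(W) have equal rank: rank(ω|_{p1(W)}) = rank(ω|_{p2(W)}). -/

import Mathlib

/-!
Pull the form on `p(W)` back to `W`, obtaining the form `(w, w') ↦ ω (p w) (p w')`. By rank-nullity
its rank equals that of `ω` on `p(W)`, since `p` is onto `p(W)` and the radical of the pullback is
the preimage of the radical (`formRank_map`). For isotropic `W`, orthogonality of `V1` and `V2`
gives `0 = ω w w' = ω (p1 w) (p1 w') + ω (p2 w) (p2 w')`, so the two pullbacks are negatives of each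
other; they therefore have the same radical, hence the same rank.
-/

open Module

/-- The radical of the restriction of the bilinear form `ω` to the subspace `W`,
i.e. `{w ∈ W : ω w w' = 0 for all w' ∈ W}`. -/
def formRadical {F V : Type*} [Field F] [AddCommGroup V] [Module F V]
    (ω : V →ₗ[F] V →ₗ[F] F) (W : Submodule F V) : Submodule F V :=
  W ⊓ ⨅ w ∈ W, LinearMap.ker (ω.flip w)

/-- The rank of the restriction of the bilinear form `ω` to the subspace `W`,
i.e. `dim W` minus the dimension of the radical of `ω|_W`. -/
noncomputable def formRank {F V : Type*} [Field F] [AddCommGroup V] [Module F V]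
    (ω : V →ₗ[F] V →ₗ[F] F) (W : Submodule F V) : ℕ :=
  Module.finrank F W - Module.finrank F (formRadical ω W)

/-- Rank-nullity for `p` restricted to a subspace. -/
lemma finrank_map_add_finrank_ker_inf {F V : Type*} [Field F] [AddCommGroup V] [Module F V]
    [FiniteDimensional F V] (p : V →ₗ[F] V) (W : Submodule F V) :
    Module.finrank F (W.map p) + Module.finrank F (W ⊓ LinearMap.ker p : Submodule F V)
      = Module.finrank F W := by
  have h := (p.domRestrict W).finrank_range_add_finrank_ker
  have hk : (LinearMap.ker (p.domRestrict W)).map W.subtype = W ⊓ LinearMap.ker p := by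
    ext x
    simp [and_comm]
  rw [LinearMap.range_domRestrict] at h
  rw [← hk, Submodule.finrank_map_subtype_eq]
  exact h

lemma mem_formRadical {F V : Type*} [Field F] [AddCommGroup V] [Module F V]
    (ω : V →ₗ[F] V →ₗ[F] F) (W : Submodule F V) (x : V) :
    x ∈ formRadical ω W ↔ x ∈ W ∧ ∀ w ∈ W, ω x w = 0 := by
  simp [formRadical]

/-- The rank of `ω` on `p(W)` is the codimension in `W` of the radical of the pulled-back form. -/
lemma formRank_map {F V : Type*} [Field F] [AddCommGroup V] [Module F V]
    [FiniteDimensional F V] (ω : V →ₗ[F] V →ₗ[F] F) (p : V →ₗ[F] V) (W K : Submodule F V)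
    (hK : ∀ x, x ∈ K ↔ x ∈ W ∧ ∀ w ∈ W, ω (p x) (p w) = 0) :
    formRank ω (W.map p) = Module.finrank F W - Module.finrank F K := by
  have hmap : K.map p = formRadical ω (W.map p) := by
    ext x
    simp only [mem_formRadical, Submodule.mem_map, hK]
    constructor
    · rintro ⟨y, ⟨hy, h⟩, rfl⟩
      refine ⟨⟨y, hy, rfl⟩, ?_⟩
      rintro _ ⟨w, hw, rfl⟩
      exact h w hw
    · rintro ⟨⟨y, hy, rfl⟩, h⟩
      exact ⟨y, ⟨hy, fun w hw => h _ ⟨w, hw, rfl⟩⟩, rfl⟩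
  have hker : K ⊓ LinearMap.ker p = W ⊓ LinearMap.ker p := by
    ext x
    simp only [Submodule.mem_inf, hK, LinearMap.mem_ker]
    constructor
    · rintro ⟨⟨h, -⟩, h0⟩
      exact ⟨h, h0⟩
    · rintro ⟨h, h0⟩
      exact ⟨⟨h, fun w _ => by simp [h0]⟩, h0⟩
  have h1 := finrank_map_add_finrank_ker_inf p W
  have h2 := finrank_map_add_finrank_ker_inf p K
  rw [hker, hmap] at h2
  unfold formRank
  omega

/-- For an isotropic subspace `W` of a symplectic space with orthogonal
decomposition `V = V1 ⊕ V2`, the restrictions of `ω` to the projections `p1(W)` and `p2(W)`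
have equal rank. -/
theorem isotropic_projection_ranks_equal
    {F V : Type*} [Field F] [AddCommGroup V] [Module F V] [FiniteDimensional F V]
    (ω : V →ₗ[F] V →ₗ[F] F)
    (halt : ∀ x, ω x x = 0)
    (hnd : ∀ x, (∀ y, ω x y = 0) → x = 0)
    (V1 V2 : Submodule F V) (hcompl : IsCompl V1 V2)
    (horth : ∀ v1 ∈ V1, ∀ v2 ∈ V2, ω v1 v2 = 0)
    (p1 p2 : V →ₗ[F] V)
    (hp1 : ∀ v1 ∈ V1, ∀ v2 ∈ V2, p1 (v1 + v2) = v1)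
    (hp2 : ∀ v1 ∈ V1, ∀ v2 ∈ V2, p2 (v1 + v2) = v2)
    (W : Submodule F V)
    (hW : ∀ w ∈ W, ∀ w' ∈ W, ω w w' = 0) :
    formRank ω (Submodule.map p1 W) = formRank ω (Submodule.map p2 W) := by
  have hsymm : ∀ x y, ω x y = 0 → ω y x = 0 := fun x y h => by
    have := halt (x + y)
    simpa [halt, h] using this
  have key : ∀ w ∈ W, ∀ w' ∈ W, ω (p1 w) (p1 w') + ω (p2 w) (p2 w') = 0 := by
    intro w hw w' hw'
    have h0 := hW w hw w' hw'
    obtain ⟨a, ha, b, hb, rfl⟩ := Submodule.mem_sup.1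
      (hcompl.sup_eq_top ▸ Submodule.mem_top : w ∈ V1 ⊔ V2)
    obtain ⟨c, hc, d, hd, rfl⟩ := Submodule.mem_sup.1
      (hcompl.sup_eq_top ▸ Submodule.mem_top : w' ∈ V1 ⊔ V2)
    rw [hp1 a ha b hb, hp1 c hc d hd, hp2 a ha b hb, hp2 c hc d hd]
    simpa [horth a ha d hd, hsymm _ _ (horth c hc b hb)] using h0
  -- the common radical of the two pulled-back forms
  let K : Submodule F V := W ⊓ (formRadical ω (W.map p1)).comap p1
  have hK1 : ∀ x, x ∈ K ↔ x ∈ W ∧ ∀ w ∈ W, ω (p1 x) (p1 w) = 0 := by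
    intro x
    simp only [K, Submodule.mem_inf, Submodule.mem_comap, mem_formRadical]
    constructor
    · rintro ⟨hx, -, h⟩
      exact ⟨hx, fun w hw => h _ (Submodule.mem_map_of_mem hw)⟩
    · rintro ⟨hx, h⟩
      refine ⟨hx, Submodule.mem_map_of_mem hx, ?_⟩
      rintro _ ⟨w, hw, rfl⟩
      exact h w hw
  have hK2 : ∀ x, x ∈ K ↔ x ∈ W ∧ ∀ w ∈ W, ω (p2 x) (p2 w) = 0 := by
    intro x
    rw [hK1]
    refine and_congr_right fun hx => forall₂_congr fun w hw => ?_
    rw [eq_neg_of_add_eq_zero_left (key x hx w hw), neg_eq_zero]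
  rw [formRank_map ω p1 W K hK1, formRank_map ω p2 W K hK2]
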